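/- Let r ∈ {2,3} and let G be a finite abelian group with r ∤ |G| and K_1(G) = K_1^*(G). Then for every UFIM S over (C_r ⊕ G)∖{0}, either k(S) ≤ K_1^*(C_r ⊕ G) = 1 + K_1^*(G), or every irreducible factor of S contains an element lying outside the subgroup C_r ⊕ {0}. -/

import Mathlib

open Finset

/-- `S(I)` is minimal zero-sum: nonempty, zero-sum, and no proper nonempty
subfamily is zero-sum. -/
def IsMinZeroSum {G : Type*} [AddCommGroup G] {ℓ : ℕ} (g : Fin ℓ → G)
    (I : Finset (Fin ℓ)) : Prop :=
  I.Nonempty ∧ ∑ i ∈ I, g i = 0 ∧ ∀ J ⊂ I, J.Nonempty → ∑ i ∈ J, g i ≠ 0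

/-- `P` is an irreducible factorization of the indexed multiset `g`: a partition
of the index set all of whose parts are minimal zero-sum. -/
def IsFactorization {G : Type*} [AddCommGroup G] {ℓ : ℕ} (g : Fin ℓ → G)
    (P : Finpartition (Finset.univ : Finset (Fin ℓ))) : Prop :=
  ∀ I ∈ P.parts, IsMinZeroSum g I

/-- `g` is a unique factorization indexed multiset (UFIM) over `G∖{0}`:
all elements are nonzero and there is exactly one irreducible factorization. -/
def IsUFIM {G : Type*} [AddCommGroup G] {ℓ : ℕ} (g : Fin ℓ → G) : Prop :=
  (∀ i, g i ≠ 0) ∧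
  ∃! P : Finpartition (Finset.univ : Finset (Fin ℓ)), IsFactorization g P

/-- The cross number `k(S) = ∑ 1/ord(g_i)`. -/
noncomputable def crossNum {G : Type*} [AddCommGroup G] {ℓ : ℕ} (g : Fin ℓ → G) : ℝ :=
  ∑ i, (1 : ℝ) / (addOrderOf (g i) : ℝ)

/-- `K₁(G)`: the maximal cross number of a UFIM over `G∖{0}`. -/
noncomputable def K1 (G : Type*) [AddCommGroup G] : ℝ :=
  sSup {x : ℝ | ∃ (ℓ : ℕ) (g : Fin ℓ → G), IsUFIM g ∧ crossNum g = x}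

/-- `N₁(G)`: the maximal length of a UFIM over `G∖{0}`. -/
noncomputable def N1 (G : Type*) [AddCommGroup G] : ℕ :=
  sSup {n : ℕ | ∃ g : Fin n → G, IsUFIM g}

/-- `K(G)`: the maximal cross number of a minimal zero-sum indexed multiset over `G∖{0}`. -/
noncomputable def Kcross (G : Type*) [AddCommGroup G] : ℝ :=
  sSup {x : ℝ | ∃ (ℓ : ℕ) (g : Fin ℓ → G), (∀ i, g i ≠ 0) ∧
    IsMinZeroSum g Finset.univ ∧ crossNum g = x}

/-- `g` is zero-sum free: no nonempty subfamily is zero-sum. -/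
def IsZeroSumFree {G : Type*} [AddCommGroup G] {ℓ : ℕ} (g : Fin ℓ → G) : Prop :=
  ∀ I : Finset (Fin ℓ), I.Nonempty → ∑ i ∈ I, g i ≠ 0

/-- The little cross number `k(G)`: the maximal cross number of a zero-sum free
indexed multiset over `G∖{0}`. -/
noncomputable def littleCross (G : Type*) [AddCommGroup G] : ℝ :=
  sSup {x : ℝ | ∃ (ℓ : ℕ) (g : Fin ℓ → G), (∀ i, g i ≠ 0) ∧
    IsZeroSumFree g ∧ crossNum g = x}

/-!
Any two minimal zero-sum subfamilies of a UFIM which meet coincide, so a factor `I` meeting a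
zero-sum subfamily is contained in it. Let `φ : A →+ B` have kernel of order at most three, and
suppose that `I` lies in `φ.ker`. The nonzero elements of `φ.ker` agree up to sign, so the
subfamilies of `I` represent all of `φ.ker`. If `T` avoids `I` and its sum lies in `φ.ker`, then
some `J ⊆ I` cancels that sum; now `T ∪ J` is zero-sum, so it misses `I` or contains it, and in both
cases `T` is itself zero-sum. Hence deleting `I` and applying `φ` gives a UFIM over `B`, at the cost
of the cross number of `I`, which is at most one. The cross number of that UFIM is bounded by
`K1 B`, a supremum of a bounded set because a UFIM contains each element `a` at most `ord a` times.
The theorem is the case of the projection `C_r ⊕ G → G`.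
-/

section Factorization

lemma sum_sdiff_eq_zero {ι M : Type*} [DecidableEq ι] [AddCommGroup M] {f : ι → M}
    {s t : Finset ι} (hst : s ⊆ t) (ht : ∑ i ∈ t, f i = 0) (hs : ∑ i ∈ s, f i = 0) :
    ∑ i ∈ t \ s, f i = 0 := by
  rw [sum_sdiff_eq_sub hst, ht, hs, sub_zero]

variable {G : Type*} [AddCommGroup G] {ℓ : ℕ} {g : Fin ℓ → G} {I J s : Finset (Fin ℓ)}

lemma IsMinZeroSum.eq_of_subset (hI : IsMinZeroSum g I) (hJI : J ⊆ I) (hJ : J.Nonempty)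
    (hJ₀ : ∑ i ∈ J, g i = 0) : J = I := by
  by_contra hne
  exact hI.2.2 J (hJI.ssubset_of_ne hne) hJ hJ₀

lemma IsMinZeroSum.ne_singleton (hI : IsMinZeroSum g I) {x : Fin ℓ} (hx : g x ≠ 0) :
    I ≠ {x} := by
  rintro rfl
  exact hx (by simpa using hI.2.1)

lemma exists_isMinZeroSum_subset (hs : s.Nonempty) (hs₀ : ∑ i ∈ s, g i = 0) :
    ∃ J ⊆ s, IsMinZeroSum g J := by
  obtain ⟨J, hJs, hJ⟩ := exists_minimal_le_of_wellFoundedLT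
    (fun K : Finset (Fin ℓ) => K.Nonempty ∧ ∑ i ∈ K, g i = 0) s ⟨hs, hs₀⟩
  exact ⟨J, hJs, hJ.prop.1, hJ.prop.2, fun K hKJ hK hK₀ => hJ.not_prop_of_lt hKJ ⟨hK, hK₀⟩⟩

lemma exists_finpartition_isMinZeroSum (hs₀ : ∑ i ∈ s, g i = 0) :
    ∃ Q : Finpartition s, ∀ A ∈ Q.parts, IsMinZeroSum g A := by
  induction s using Finset.strongInduction with
  | H s ih =>
    rcases s.eq_empty_or_nonempty with rfl | hs
    · exact ⟨Finpartition.empty _, by simp⟩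
    · obtain ⟨J, hJs, hJ⟩ := exists_isMinZeroSum_subset hs hs₀
      obtain ⟨Q, hQ⟩ := ih (s \ J) (sdiff_ssubset hJs hJ.1) (sum_sdiff_eq_zero hJs hs₀ hJ.2.1)
      refine ⟨Q.extend hJ.1.ne_empty sdiff_disjoint (sdiff_union_of_subset hJs), ?_⟩
      exact forall_mem_insert _ _ _ |>.2 ⟨hJ, hQ⟩

lemma IsMinZeroSum.exists_isFactorization_mem (hI : IsMinZeroSum g I) (h₀ : ∑ i, g i = 0) :
    ∃ P : Finpartition (univ : Finset (Fin ℓ)), IsFactorization g P ∧ I ∈ P.parts := by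
  obtain ⟨Q, hQ⟩ := exists_finpartition_isMinZeroSum
    (sum_sdiff_eq_zero (subset_univ I) h₀ hI.2.1)
  refine ⟨Q.extend hI.1.ne_empty sdiff_disjoint (sdiff_union_of_subset (subset_univ I)), ?_,
    mem_insert_self _ _⟩
  exact forall_mem_insert _ _ _ |>.2 ⟨hI, hQ⟩

lemma IsFactorization.sum_eq_zero {P : Finpartition (univ : Finset (Fin ℓ))}
    (hP : IsFactorization g P) : ∑ i, g i = 0 := by
  rw [← P.biUnion_parts, sum_biUnion P.disjoint]
  exact Finset.sum_eq_zero fun A hA => (hP A hA).2.1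

lemma IsFactorization.parts_subset {P Q : Finpartition (univ : Finset (Fin ℓ))}
    (hP : IsFactorization g P) (hQ : IsFactorization g Q)
    (hmeet : ∀ I J, IsMinZeroSum g I → IsMinZeroSum g J → ¬Disjoint I J → I = J) :
    P.parts ⊆ Q.parts := by
  intro A hA
  obtain ⟨x, hx⟩ := (hP A hA).1
  obtain ⟨B, hB, hxB⟩ := Q.exists_mem (mem_univ x)
  rwa [hmeet A B (hP A hA) (hQ B hB) (not_disjoint_iff.2 ⟨x, hx, hxB⟩)]

theorem isUFIM_iff : IsUFIM g ↔ (∀ i, g i ≠ 0) ∧ ∑ i, g i = 0 ∧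
    ∀ I J, IsMinZeroSum g I → IsMinZeroSum g J → ¬Disjoint I J → I = J := by
  refine and_congr_right fun _ => ⟨?_, ?_⟩
  · rintro ⟨P, hP, hunique⟩
    have mem_parts (I) (hI : IsMinZeroSum g I) : I ∈ P.parts := by
      obtain ⟨Q, hQ, hIQ⟩ := hI.exists_isFactorization_mem hP.sum_eq_zero
      exact hunique Q hQ ▸ hIQ
    refine ⟨hP.sum_eq_zero, fun I J hI hJ hIJ => ?_⟩
    by_contra hne
    exact hIJ (P.disjoint (mem_parts I hI) (mem_parts J hJ) hne)
  · rintro ⟨h₀, hmeet⟩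
    obtain ⟨P, hP⟩ := exists_finpartition_isMinZeroSum h₀
    exact ⟨P, hP, fun Q (hQ : IsFactorization g Q) => Finpartition.ext <|
      (hQ.parts_subset hP hmeet).antisymm (IsFactorization.parts_subset hP hQ hmeet)⟩

lemma IsUFIM.sum_eq_zero (hg : IsUFIM g) : ∑ i, g i = 0 := (isUFIM_iff.1 hg).2.1

lemma IsUFIM.subset_of_not_disjoint (hg : IsUFIM g) (hI : IsMinZeroSum g I)
    (hs₀ : ∑ i ∈ s, g i = 0) (hIs : ¬Disjoint I s) : I ⊆ s := by
  obtain ⟨x, hxI, hxs⟩ := not_disjoint_iff.1 hIs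
  obtain ⟨Q, hQ⟩ := exists_finpartition_isMinZeroSum hs₀
  obtain ⟨A, hA, hxA⟩ := Q.exists_mem hxs
  rw [(isUFIM_iff.1 hg).2.2 I A hI (hQ A hA) (not_disjoint_iff.2 ⟨x, hxI, hxA⟩)]
  exact Q.subset hA

lemma IsUFIM.exists_isMinZeroSum_mem (hg : IsUFIM g) (x : Fin ℓ) :
    ∃ I, IsMinZeroSum g I ∧ x ∈ I := by
  obtain ⟨P, hP, -⟩ := hg.2
  obtain ⟨I, hI, hxI⟩ := P.exists_mem (mem_univ x)
  exact ⟨I, hP I hI, hxI⟩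

end Factorization

section CrossNumber

lemma sum_eq_zero_of_card_eq_addOrderOf {ι M : Type*} [AddCommMonoid M] {f : ι → M} {s : Finset ι}
    {a : M} (hs : ∀ i ∈ s, f i = a) (hcard : #s = addOrderOf a) : ∑ i ∈ s, f i = 0 := by
  rw [sum_eq_card_nsmul hs, hcard, addOrderOf_nsmul_eq_zero]

variable {G : Type*} [AddCommGroup G] [Finite G] {ℓ : ℕ} {g : Fin ℓ → G}

lemma IsUFIM.card_fiber_le_addOrderOf [DecidableEq G] (hg : IsUFIM g) (a : G) :
    #{i | g i = a} ≤ addOrderOf a := by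
  by_contra! hlt
  obtain ⟨x, hx⟩ := card_pos.1 (Nat.zero_lt_of_lt hlt)
  obtain ⟨I, hI, hxI⟩ := hg.exists_isMinZeroSum_mem x
  obtain ⟨y, hyI, hyx⟩ : ∃ y ∈ I, y ≠ x := by
    by_contra! h
    exact hI.ne_singleton (hg.1 x) (eq_singleton_iff_unique_mem.2 ⟨hxI, h⟩)
  -- `ord a` copies of `a` which include `x` but avoid `y` form a zero-sum family splitting `I`.
  obtain ⟨T, hxT, hTy, hT⟩ := exists_subsuperset_card_eq
    (singleton_subset_iff.2 (mem_erase.2 ⟨hyx.symm, hx⟩)) (addOrderOf_pos a)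
    ((Nat.le_sub_one_of_lt hlt).trans pred_card_le_card_erase)
  have hT₀ : ∑ i ∈ T, g i = 0 := sum_eq_zero_of_card_eq_addOrderOf
    (fun i hi => (mem_filter.1 (mem_of_mem_erase (hTy hi))).2) hT
  have hIT : I ⊆ T := hg.subset_of_not_disjoint hI hT₀
    (not_disjoint_iff.2 ⟨x, hxI, singleton_subset_iff.1 hxT⟩)
  exact notMem_erase y _ (hTy (hIT hyI))

lemma IsUFIM.crossNum_le_card (hg : IsUFIM g) : crossNum g ≤ Nat.card G := by
  classical
  have := Fintype.ofFinite G
  calc crossNum g = ∑ a : G, ∑ i with g i = a, 1 / (addOrderOf a : ℝ) :=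
        (sum_fiberwise' univ g fun a => 1 / (addOrderOf a : ℝ)).symm
    _ = ∑ a : G, (#{i | g i = a} : ℝ) / addOrderOf a := by
        simp only [sum_const, nsmul_eq_mul, mul_one_div]
    _ ≤ ∑ _a : G, 1 := sum_le_sum fun a _ =>
        div_le_one_of_le₀ (by exact_mod_cast hg.card_fiber_le_addOrderOf a) (Nat.cast_nonneg _)
    _ = Nat.card G := by simp

lemma IsUFIM.crossNum_le_K1 (hg : IsUFIM g) : crossNum g ≤ K1 G := by
  refine le_csSup ⟨Nat.card G, ?_⟩ ⟨ℓ, g, hg, rfl⟩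
  rintro _ ⟨m, h, hh, rfl⟩
  exact hh.crossNum_le_card

end CrossNumber

section SmallSubgroup

lemma eq_or_eq_neg_of_card_le_three {G : Type*} [AddGroup G] {K : AddSubgroup G} [Finite K]
    (hK : Nat.card K ≤ 3) {a b : G} (haK : a ∈ K) (hbK : b ∈ K) (ha : a ≠ 0) (hb : b ≠ 0) :
    b = a ∨ b = -a := by
  classical
  by_contra! hab
  have hsum : a + b ≠ 0 := fun h => hab.2 (eq_neg_of_add_eq_zero_right h)
  have hfour : #{0, a, b, a + b} = 4 := by
    simp [card_insert_of_notMem, ha.symm, hb.symm, hab.1.symm, ha, hb, hsum.symm]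
  have hsub : (({0, a, b, a + b} : Finset G) : Set G) ⊆ K := by
    simp [Set.insert_subset_iff, haK, hbK, add_mem]
  have hle : #{0, a, b, a + b} ≤ Nat.card K := by
    rw [← Set.ncard_coe_finset]
    exact Set.ncard_le_ncard hsub (Set.toFinite _)
  lia

variable {G : Type*} [AddCommGroup G] {ℓ : ℕ} {g : Fin ℓ → G} {I : Finset (Fin ℓ)}
  {K : AddSubgroup G}

lemma IsMinZeroSum.exists_subset_sum_eq [Finite K] (hI : IsMinZeroSum g I)
    (hg : ∀ i ∈ I, g i ≠ 0) (hIK : ∀ i ∈ I, g i ∈ K) (hK : Nat.card K ≤ 3) {a : G} (ha : a ∈ K) :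
    ∃ J ⊆ I, ∑ i ∈ J, g i = a := by
  rcases eq_or_ne a 0 with rfl | ha₀
  · exact ⟨∅, empty_subset I, sum_empty⟩
  obtain ⟨x, hx⟩ := hI.1
  have hxI : {x} ⊆ I := singleton_subset_iff.2 hx
  rcases eq_or_eq_neg_of_card_le_three hK (hIK x hx) ha (hg x hx) ha₀ with rfl | rfl
  · exact ⟨{x}, hxI, sum_singleton g x⟩
  · exact ⟨I \ {x}, sdiff_subset, by rw [sum_sdiff_eq_sub hxI, hI.2.1, sum_singleton, zero_sub]⟩

variable [Finite G]

lemma IsMinZeroSum.card_le_addOrderOf (hI : IsMinZeroSum g I) {x : Fin ℓ} (hx : x ∈ I)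
    (hgx : g x ≠ 0) (hsign : ∀ i ∈ I, g i = g x ∨ g i = -g x) : #I ≤ addOrderOf (g x) := by
  by_cases hconst : ∀ i ∈ I, g i = g x
  · by_contra! hlt
    obtain ⟨T, hTI, hT⟩ := exists_subset_card_eq hlt.le
    have hT_ne : T.Nonempty := card_pos.1 (hT ▸ addOrderOf_pos _)
    have hT₀ := sum_eq_zero_of_card_eq_addOrderOf (fun i hi => hconst i (hTI hi)) hT
    exact hlt.ne' (hI.eq_of_subset hTI hT_ne hT₀ ▸ hT)
  · push Not at hconst
    obtain ⟨y, hy, hyx⟩ := hconst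
    have hxy : x ≠ y := fun h => hyx (h ▸ rfl)
    have hpair : {x, y} = I := hI.eq_of_subset (by simp [insert_subset_iff, hx, hy])
      (insert_nonempty _ _) (by rw [sum_pair hxy, (hsign y hy).resolve_left hyx, add_neg_cancel])
    rw [← hpair, card_pair hxy]
    exact Nat.one_lt_iff_ne_zero_and_ne_one.2
      ⟨(addOrderOf_pos _).ne', mt AddMonoid.addOrderOf_eq_one_iff.1 hgx⟩

lemma IsMinZeroSum.sum_one_div_addOrderOf_le_one (hI : IsMinZeroSum g I) (hg : ∀ i ∈ I, g i ≠ 0)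
    (hIK : ∀ i ∈ I, g i ∈ K) (hK : Nat.card K ≤ 3) :
    ∑ i ∈ I, (1 : ℝ) / addOrderOf (g i) ≤ 1 := by
  obtain ⟨x, hx⟩ := hI.1
  have hsign (i) (hi : i ∈ I) : g i = g x ∨ g i = -g x :=
    eq_or_eq_neg_of_card_le_three hK (hIK x hx) (hIK i hi) (hg x hx) (hg i hi)
  have hord (i) (hi : i ∈ I) : addOrderOf (g i) = addOrderOf (g x) := by
    rcases hsign i hi with h | h <;> simp only [h, addOrderOf_neg]
  calc ∑ i ∈ I, (1 : ℝ) / addOrderOf (g i) = #I / addOrderOf (g x) := by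
        rw [sum_congr rfl fun i hi => by rw [hord i hi], sum_const, nsmul_eq_mul, mul_one_div]
    _ ≤ 1 := div_le_one_of_le₀
        (by exact_mod_cast hI.card_le_addOrderOf hx (hg x hx) hsign) (Nat.cast_nonneg _)

end SmallSubgroup

section FactorRemoval

variable {A B : Type*} [AddCommGroup A] [AddCommGroup B] {ℓ m : ℕ} {g : Fin ℓ → A}
  {I : Finset (Fin ℓ)} {φ : A →+ B} {f : Fin m ↪ Fin ℓ}

lemma IsMinZeroSum.map_of_sum_eq_zero_iff {h : Fin m → B}
    (hfh : ∀ s : Finset (Fin m), ∑ j ∈ s, h j = 0 ↔ ∑ i ∈ s.map f, g i = 0)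
    {s : Finset (Fin m)} (hs : IsMinZeroSum h s) : IsMinZeroSum g (s.map f) := by
  refine ⟨hs.1.map, (hfh s).1 hs.2.1, fun J hJ hJ_ne hJ₀ => ?_⟩
  obtain ⟨t, -, rfl⟩ := subset_map_iff.1 hJ.subset
  exact hs.2.2 t (map_ssubset_map.1 hJ) (map_nonempty.1 hJ_ne) ((hfh t).2 hJ₀)

lemma IsUFIM.of_sum_eq_zero_iff (hg : IsUFIM g) {h : Fin m → B} (h₀ : ∑ j, h j = 0)
    (hfh : ∀ s : Finset (Fin m), ∑ j ∈ s, h j = 0 ↔ ∑ i ∈ s.map f, g i = 0) : IsUFIM h := by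
  refine isUFIM_iff.2 ⟨fun j hj => hg.1 (f j) ?_, h₀, fun J J' hJ hJ' hmeet => ?_⟩
  · simpa [hj] using hfh {j}
  · exact map_injective f <| (isUFIM_iff.1 hg).2.2 _ _ (hJ.map_of_sum_eq_zero_iff hfh)
      (hJ'.map_of_sum_eq_zero_iff hfh) (by rwa [disjoint_map])

lemma IsUFIM.sum_eq_zero_of_map_sum_eq_zero (hg : IsUFIM g) (hI : IsMinZeroSum g I)
    (hcover : ∀ a ∈ φ.ker, ∃ J ⊆ I, ∑ i ∈ J, g i = a) {T : Finset (Fin ℓ)} (hT : Disjoint T I)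
    (hφT : φ (∑ i ∈ T, g i) = 0) : ∑ i ∈ T, g i = 0 := by
  obtain ⟨J, hJI, hJ⟩ := hcover (-∑ i ∈ T, g i) (neg_mem (AddMonoidHom.mem_ker.2 hφT))
  suffices ∑ i ∈ J, g i = 0 by rwa [hJ, neg_eq_zero] at this
  rcases J.eq_empty_or_nonempty with rfl | ⟨x, hx⟩
  · exact sum_empty
  have hTJ : ∑ i ∈ T ∪ J, g i = 0 := by
    rw [sum_union (hT.mono_right hJI), hJ, add_neg_cancel]
  have hITJ : I ⊆ T ∪ J := hg.subset_of_not_disjoint hI hTJ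
    (not_disjoint_iff.2 ⟨x, hJI hx, mem_union_right T hx⟩)
  rw [hJI.antisymm (hT.symm.left_le_of_le_sup_left hITJ), hI.2.1]

lemma IsUFIM.comp_of_map_univ_eq_compl (hg : IsUFIM g) (hI : IsMinZeroSum g I)
    (hcover : ∀ a ∈ φ.ker, ∃ J ⊆ I, ∑ i ∈ J, g i = a) (hf : univ.map f = Iᶜ) :
    IsUFIM (φ ∘ g ∘ f) := by
  have hφ (s : Finset (Fin m)) : ∑ j ∈ s, (φ ∘ g ∘ f) j = φ (∑ i ∈ s.map f, g i) := by
    simp only [sum_map, map_sum, Function.comp_apply]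
  refine hg.of_sum_eq_zero_iff (f := f) ?_ fun s => ?_
  · rw [hφ, hf, compl_eq_univ_sdiff,
      sum_sdiff_eq_zero (subset_univ I) hg.sum_eq_zero hI.2.1, map_zero]
  · rw [hφ]
    have hs : Disjoint (s.map f) I :=
      disjoint_compl_left.mono_left (hf ▸ map_subset_map.2 (subset_univ s))
    exact ⟨hg.sum_eq_zero_of_map_sum_eq_zero hI hcover hs, fun h => by rw [h, map_zero]⟩

lemma crossNum_le_sum_add_crossNum_comp [Finite A] (φ : A →+ B) (hf : univ.map f = Iᶜ) :
    crossNum g ≤ ∑ i ∈ I, (1 : ℝ) / addOrderOf (g i) + crossNum (φ ∘ g ∘ f) := by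
  rw [crossNum, ← sum_add_sum_compl I, ← hf, sum_map]
  refine add_le_add_right (sum_le_sum fun j _ => ?_) _
  have hdvd : addOrderOf (φ (g (f j))) ∣ addOrderOf (g (f j)) := addOrderOf_map_dvd φ _
  have hpos := addOrderOf_pos (g (f j))
  exact one_div_le_one_div_of_le (by exact_mod_cast Nat.pos_of_dvd_of_pos hdvd hpos)
    (by exact_mod_cast Nat.le_of_dvd hpos hdvd)

end FactorRemoval

lemma card_ker_snd (A B : Type*) [AddGroup A] [AddGroup B] :
    Nat.card (AddMonoidHom.snd A B).ker = Nat.card A := by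
  rw [AddMonoidHom.ker_snd, Nat.card_congr (AddSubgroup.prodEquiv ⊤ ⊥).toEquiv, Nat.card_prod,
    AddSubgroup.card_top, AddSubgroup.card_bot, mul_one]

theorem roplus_dichotomy_general {A B : Type*} [AddCommGroup A] [AddCommGroup B] [Finite A]
    [Finite B] (φ : A →+ B) (hφ : Nat.card φ.ker ≤ 3) {ℓ : ℕ} {g : Fin ℓ → A} (hg : IsUFIM g) :
    crossNum g ≤ 1 + K1 B ∨
    ∀ P : Finpartition (univ : Finset (Fin ℓ)), IsFactorization g P →
      ∀ I ∈ P.parts, ∃ i ∈ I, φ (g i) ≠ 0 := by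
  refine or_iff_not_imp_right.2 fun hker => ?_
  push Not at hker
  obtain ⟨P, hP, I, hIP, hI_ker⟩ := hker
  have hI : IsMinZeroSum g I := hP I hIP
  have hI₀ : ∀ i ∈ I, g i ≠ 0 := fun i _ => hg.1 i
  have hf := map_orderEmbOfFin_univ Iᶜ rfl
  have hcover : ∀ a ∈ φ.ker, ∃ J ⊆ I, ∑ i ∈ J, g i = a :=
    fun a => hI.exists_subset_sum_eq hI₀ hI_ker hφ
  exact (crossNum_le_sum_add_crossNum_comp φ hf).trans <| add_le_add
    (hI.sum_one_div_addOrderOf_le_one hI₀ hI_ker hφ)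
    (hg.comp_of_map_univ_eq_compl hI hcover hf).crossNum_le_K1

/-- Lemma (roplus): let `r ∈ {2,3}` and `G = ⊕_i C_{p_i^{e_i}}` a finite abelian group with
`r ∤ |G|` and `K₁(G) = K₁*(G)`. Then for every UFIM `S` over `(C_r ⊕ G)∖{0}`, either
`k(S) ≤ K₁*(C_r ⊕ G) = 1 + K₁*(G)`, or every irreducible factor of `S` contains an element
lying outside the subgroup `C_r ⊕ {0}`. -/
theorem roplus_dichotomy (r : ℕ) (hr : r = 2 ∨ r = 3)
    (t : ℕ) (p : Fin t → ℕ) (hp : ∀ i, (p i).Prime) (e : Fin t → ℕ) (he : ∀ i, 0 < e i)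
    (hrG : ¬ r ∣ ∏ i, p i ^ e i)
    (hK1 : K1 ((i : Fin t) → ZMod (p i ^ e i)) =
      ∑ i, ((p i : ℝ) ^ e i - 1) / ((p i : ℝ) ^ e i - (p i : ℝ) ^ (e i - 1)))
    {ℓ : ℕ} (g : Fin ℓ → ZMod r × ((i : Fin t) → ZMod (p i ^ e i))) (hg : IsUFIM g) :
    crossNum g ≤
      1 + ∑ i, ((p i : ℝ) ^ e i - 1) / ((p i : ℝ) ^ e i - (p i : ℝ) ^ (e i - 1)) ∨
    ∀ P : Finpartition (Finset.univ : Finset (Fin ℓ)), IsFactorization g P →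
      ∀ I ∈ P.parts, ∃ i ∈ I, (g i).2 ≠ 0 := by
  have (i : Fin t) : NeZero (p i ^ e i) := ⟨pow_ne_zero _ (hp i).ne_zero⟩
  have : NeZero r := ⟨by lia⟩
  have hker : Nat.card (AddMonoidHom.snd (ZMod r) ((i : Fin t) → ZMod (p i ^ e i))).ker ≤ 3 := by
    rw [card_ker_snd, Nat.card_zmod]
    lia
  rw [← hK1]
  exact roplus_dichotomy_general _ hker hg
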